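/- arXiv:2205.06793 — 7 statements merged into one kernel-verified Lean document; each statement's English description precedes it below -/
import Mathlib

section
/- Suppose Fr < Fk and Ir ≤ λ·Fr. For any real numbers β1 ≥ 0 and β2 with 0 ≤ β2 ≤ α that satisfy the flow constraint λ·Fr·α ≤ λ·Fr·β1 + Ir·β2, the read conversion bandwidth satisfies γ_R = λ·Fk·β1 + Ir·β2 ≥ λ·Fk·α − Ir·α·(Fk/Fr − 1). -/
/-- Theorem 1, case `Ir ≤ λ·Fr` (with `Fr < Fk`): any feasible `(β1, β2)` with
`β1 ≥ 0`, `0 ≤ β2 ≤ α` satisfying the flow constraint `λ·Fr·α ≤ λ·Fr·β1 + Ir·β2`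
has read conversion bandwidth `γ_R = λ·Fk·β1 + Ir·β2 ≥ λ·Fk·α − Ir·α·(Fk/Fr − 1)`. -/
theorem split_bound_loose_case1 (lam Fk Fr Ir : ℕ) (hlam : 2 ≤ lam)
    (hFk : 0 < Fk) (hFr : 0 < Fr) (hIr : 0 < Ir)
    (hFrFk : Fr < Fk) (hIrlam : Ir ≤ lam * Fr)
    (α β1 β2 : ℝ) (hα : 0 < α)
    (hβ1 : 0 ≤ β1) (hβ2 : 0 ≤ β2) (hβ2α : β2 ≤ α)
    (hflow : (lam : ℝ) * Fr * α ≤ (lam : ℝ) * Fr * β1 + (Ir : ℝ) * β2) :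
    (lam : ℝ) * Fk * β1 + (Ir : ℝ) * β2
      ≥ (lam : ℝ) * Fk * α - (Ir : ℝ) * α * ((Fk : ℝ) / Fr - 1) := by
  have hFr' : (0 : ℝ) < Fr := by exact_mod_cast hFr
  have hlt : (Fr : ℝ) ≤ Fk := by exact_mod_cast hFrFk.le
  obtain ⟨t, ht⟩ : ∃ t : ℝ, t = (Fk : ℝ) / Fr := ⟨_, rfl⟩
  have ht1 : 1 ≤ t := by rw [ht, le_div_iff₀ hFr']; linarith
  have hk : (Fk : ℝ) = t * Fr := by rw [ht]; field_simp
  rw [← ht, hk]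
  have h1 := mul_le_mul_of_nonneg_left hflow (by linarith : 0 ≤ t)
  have h2 : 0 ≤ (Ir : ℝ) * (t - 1) * (α - β2) :=
    mul_nonneg (mul_nonneg (Nat.cast_nonneg _) (by linarith)) (by linarith)
  linarith
end

section
/- Suppose Fr < Fk and Ir ≤ λ·Fr. Then the value λ·Fk·α − Ir·α·(Fk/Fr − 1) is the least value of the objective γ_R = λ·Fk·β1 + Ir·β2 over the feasible set {(β1, β2) : 0 ≤ β1 ≤ α, 0 ≤ β2 ≤ α, and λ·Fr·α ≤ λ·Fr·β1 + Ir·β2}, and this least value is attained at the point β1 = (1 − Ir/(λ·Fr))·α, β2 = α. -/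
/-- Lemma 2, case `Ir ≤ λ·Fr` (with `Fr < Fk`): the value
`λ·Fk·α − Ir·α·(Fk/Fr − 1)` is the least value of `γ_R = λ·Fk·β1 + Ir·β2`
over the feasible set `{(β1, β2) : 0 ≤ β1 ≤ α, 0 ≤ β2 ≤ α,
λ·Fr·α ≤ λ·Fr·β1 + Ir·β2}`, attained at `β1 = (1 − Ir/(λ·Fr))·α`, `β2 = α`. -/
theorem beta_loose_case1 (lam Fk Fr Ir : ℕ) (hlam : 2 ≤ lam)
    (hFk : 0 < Fk) (hFr : 0 < Fr) (hIr : 0 < Ir)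
    (hFrFk : Fr < Fk) (hIrlam : Ir ≤ lam * Fr)
    (α : ℝ) (hα : 0 < α) :
    IsLeast {g : ℝ | ∃ β1 β2 : ℝ, 0 ≤ β1 ∧ β1 ≤ α ∧ 0 ≤ β2 ∧ β2 ≤ α ∧
        (lam : ℝ) * Fr * α ≤ (lam : ℝ) * Fr * β1 + (Ir : ℝ) * β2 ∧
        g = (lam : ℝ) * Fk * β1 + (Ir : ℝ) * β2}
      ((lam : ℝ) * Fk * α - (Ir : ℝ) * α * ((Fk : ℝ) / Fr - 1)) ∧
    (lam : ℝ) * Fk * ((1 - (Ir : ℝ) / ((lam : ℝ) * Fr)) * α) + (Ir : ℝ) * α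
      = (lam : ℝ) * Fk * α - (Ir : ℝ) * α * ((Fk : ℝ) / Fr - 1) := by
  have hl : (0 : ℝ) < lam := by
    have : 0 < lam := by omega
    exact_mod_cast this
  have hr : (0 : ℝ) < Fr := by exact_mod_cast hFr
  have hi : (0 : ℝ) < Ir := by exact_mod_cast hIr
  have hrk : (Fr : ℝ) < Fk := by exact_mod_cast hFrFk
  have hil : (Ir : ℝ) ≤ lam * Fr := by exact_mod_cast hIrlam
  have hlr : (0 : ℝ) < lam * Fr := mul_pos hl hr
  have heq : (lam : ℝ) * Fk * ((1 - (Ir : ℝ) / ((lam : ℝ) * Fr)) * α) + (Ir : ℝ) * α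
      = (lam : ℝ) * Fk * α - (Ir : ℝ) * α * ((Fk : ℝ) / Fr - 1) := by
    field_simp
    ring
  have hq0 : 0 ≤ (Ir : ℝ) / (lam * Fr) := by positivity
  have hq1 : (Ir : ℝ) / (lam * Fr) ≤ 1 := (div_le_one hlr).2 hil
  refine ⟨⟨⟨(1 - (Ir : ℝ) / ((lam : ℝ) * Fr)) * α, α, ?_, ?_, hα.le, le_rfl, ?_, heq.symm⟩, ?_⟩, heq⟩
  · exact mul_nonneg (by linarith) hα.le
  · nlinarith
  · apply le_of_eq
    field_simp
    ring
  · rintro g ⟨b1, b2, -, -, -, h2, hf, rfl⟩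
    have hc : 1 < (Fk : ℝ) / Fr := (one_lt_div hr).2 hrk
    have hk : (Fk : ℝ) = Fk / Fr * Fr := by field_simp
    generalize (Fk : ℝ) / Fr = c at hc hk ⊢
    rw [hk]
    have e1 := mul_le_mul_of_nonneg_left hf (by linarith : 0 ≤ c)
    have e2 := mul_le_mul_of_nonneg_left h2 (mul_nonneg hi.le (by linarith : 0 ≤ c - 1))
    linarith
end

section
/- Suppose Fr < Fk and Ir ≥ λ·Fr. Then the value λ·Fr·α is the least value of the objective γ_R = λ·Fk·β1 + Ir·β2 over the feasible set {(β1, β2) : 0 ≤ β1 ≤ α, 0 ≤ β2 ≤ α, and λ·Fr·α ≤ λ·Fr·β1 + Ir·β2}, and this least value is attained at the point β1 = 0, β2 = (λ·Fr/Ir)·α. -/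
/-- Lemma 2, case `Ir ≥ λ·Fr` (with `Fr < Fk`): the value `λ·Fr·α` is the least
value of `γ_R = λ·Fk·β1 + Ir·β2` over the feasible set `{(β1, β2) : 0 ≤ β1 ≤ α,
0 ≤ β2 ≤ α, λ·Fr·α ≤ λ·Fr·β1 + Ir·β2}`, attained at `β1 = 0`, `β2 = (λ·Fr/Ir)·α`. -/
theorem beta_loose_case2 (lam Fk Fr Ir : ℕ) (hlam : 2 ≤ lam)
    (hFk : 0 < Fk) (hFr : 0 < Fr) (hIr : 0 < Ir)
    (hFrFk : Fr < Fk) (hIrlam : lam * Fr ≤ Ir)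
    (α : ℝ) (hα : 0 < α) :
    IsLeast {g : ℝ | ∃ β1 β2 : ℝ, 0 ≤ β1 ∧ β1 ≤ α ∧ 0 ≤ β2 ∧ β2 ≤ α ∧
        (lam : ℝ) * Fr * α ≤ (lam : ℝ) * Fr * β1 + (Ir : ℝ) * β2 ∧
        g = (lam : ℝ) * Fk * β1 + (Ir : ℝ) * β2}
      ((lam : ℝ) * Fr * α) ∧
    (lam : ℝ) * Fk * 0 + (Ir : ℝ) * ((lam : ℝ) * Fr / Ir * α)
      = (lam : ℝ) * Fr * α := by
  have hI : (0 : ℝ) < Ir := by exact_mod_cast hIr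
  have hle : (lam : ℝ) * Fr ≤ Ir := by exact_mod_cast hIrlam
  have hF : (Fr : ℝ) ≤ Fk := by exact_mod_cast hFrFk.le
  have key : (Ir : ℝ) * ((lam : ℝ) * Fr / Ir * α) = (lam : ℝ) * Fr * α := by
    field_simp
  refine ⟨⟨⟨0, (lam : ℝ) * Fr / Ir * α, le_rfl, hα.le, by positivity, ?_, ?_, ?_⟩, ?_⟩, ?_⟩
  · have h1 : (lam : ℝ) * Fr / Ir ≤ 1 := (div_le_one hI).2 hle
    exact mul_le_of_le_one_left hα.le h1
  · rw [key]; simp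
  · rw [key]; simp
  · rintro g ⟨b1, b2, h1, _, _, _, h5, rfl⟩
    have h6 : (lam : ℝ) * Fr * b1 ≤ (lam : ℝ) * Fk * b1 := by gcongr
    linarith
  · rw [key]; simp
end

section
/- Suppose Fr ≤ Fk and Ir ≥ Fr. For any real numbers β1, β2 that satisfy both the flow constraint λ·Fr·α ≤ λ·Fr·β1 + Ir·β2 and the interference constraint λ·β1 ≥ (λ − 1)·β2, the read conversion bandwidth satisfies γ_R = λ·Fk·β1 + Ir·β2 ≥ λ·Fr·α·((λ − 1)·Fk + Ir)/((λ − 1)·Fr + Ir). -/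
/-- Theorem 2: if `Fr ≤ Fk` and `Ir ≥ Fr`, any `(β1, β2)` satisfying both the
flow constraint `λ·Fr·α ≤ λ·Fr·β1 + Ir·β2` and the interference constraint
`λ·β1 ≥ (λ − 1)·β2` has read conversion bandwidth
`γ_R = λ·Fk·β1 + Ir·β2 ≥ λ·Fr·α·((λ − 1)·Fk + Ir)/((λ − 1)·Fr + Ir)`. -/
theorem split_bound_tight (lam Fk Fr Ir : ℕ) (hlam : 2 ≤ lam)
    (hFk : 0 < Fk) (hFr : 0 < Fr) (hIr : 0 < Ir)
    (hFrFk : Fr ≤ Fk) (hIrFr : Fr ≤ Ir)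
    (α β1 β2 : ℝ) (hα : 0 < α)
    (hflow : (lam : ℝ) * Fr * α ≤ (lam : ℝ) * Fr * β1 + (Ir : ℝ) * β2)
    (hinterf : (lam : ℝ) * β1 ≥ ((lam : ℝ) - 1) * β2) :
    (lam : ℝ) * Fk * β1 + (Ir : ℝ) * β2
      ≥ (lam : ℝ) * Fr * α * (((lam : ℝ) - 1) * Fk + Ir) / (((lam : ℝ) - 1) * Fr + Ir) := by
  have hl : (2 : ℝ) ≤ lam := by exact_mod_cast hlam
  have hk : (Fr : ℝ) ≤ Fk := by exact_mod_cast hFrFk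
  have hr : (0 : ℝ) < Fr := by exact_mod_cast hFr
  have hk0 : (0 : ℝ) < Fk := by exact_mod_cast hFk
  have hi : (0 : ℝ) < Ir := by exact_mod_cast hIr
  have hm : (0 : ℝ) < (lam : ℝ) - 1 := by linarith
  have hD : 0 < ((lam : ℝ) - 1) * Fr + Ir := by positivity
  have hN : 0 ≤ ((lam : ℝ) - 1) * Fk + Ir := by positivity
  rw [ge_iff_le, div_le_iff₀ hD]
  have h1 := mul_le_mul_of_nonneg_right hflow hN
  have h2 : 0 ≤ (Ir : ℝ) * ((Fk : ℝ) - Fr) * ((lam : ℝ) * β1 - ((lam : ℝ) - 1) * β2) :=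
    mul_nonneg (mul_nonneg hi.le (by linarith)) (by linarith)
  linarith
end

section
/- Suppose Fr < Fk and Ir ≥ Fr. Then the value λ·Fr·α·((λ − 1)·Fk + Ir)/((λ − 1)·Fr + Ir) is the least value of the objective γ_R = λ·Fk·β1 + Ir·β2 over the feasible set {(β1, β2) : 0 ≤ β1 ≤ α, 0 ≤ β2 ≤ α, λ·Fr·α ≤ λ·Fr·β1 + Ir·β2, and λ·β1 ≥ (λ − 1)·β2}, and this least value is attained at the point β1 = (λ − 1)·Fr·α/((λ − 1)·Fr + Ir), β2 = λ·Fr·α/((λ − 1)·Fr + Ir); moreover at this point both the flow constraint and the interference constraint hold with equality. -/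
/-- Lemma 3, case `Ir ≥ Fr` (with `Fr < Fk`): the value
`λ·Fr·α·((λ − 1)·Fk + Ir)/((λ − 1)·Fr + Ir)` is the least value of
`γ_R = λ·Fk·β1 + Ir·β2` over the feasible set `{(β1, β2) : 0 ≤ β1 ≤ α,
0 ≤ β2 ≤ α, λ·Fr·α ≤ λ·Fr·β1 + Ir·β2, λ·β1 ≥ (λ − 1)·β2}`, attained at
`β1 = (λ − 1)·Fr·α/((λ − 1)·Fr + Ir)`, `β2 = λ·Fr·α/((λ − 1)·Fr + Ir)`;
moreover both constraints hold with equality at this point. -/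
theorem beta_tight (lam Fk Fr Ir : ℕ) (hlam : 2 ≤ lam)
    (hFk : 0 < Fk) (hFr : 0 < Fr) (hIr : 0 < Ir)
    (hFrFk : Fr < Fk) (hIrFr : Fr ≤ Ir)
    (α : ℝ) (hα : 0 < α) :
    IsLeast {g : ℝ | ∃ β1 β2 : ℝ, 0 ≤ β1 ∧ β1 ≤ α ∧ 0 ≤ β2 ∧ β2 ≤ α ∧
        (lam : ℝ) * Fr * α ≤ (lam : ℝ) * Fr * β1 + (Ir : ℝ) * β2 ∧
        (lam : ℝ) * β1 ≥ ((lam : ℝ) - 1) * β2 ∧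
        g = (lam : ℝ) * Fk * β1 + (Ir : ℝ) * β2}
      ((lam : ℝ) * Fr * α * (((lam : ℝ) - 1) * Fk + Ir) / (((lam : ℝ) - 1) * Fr + Ir)) ∧
    ((lam : ℝ) * Fk * (((lam : ℝ) - 1) * Fr * α / (((lam : ℝ) - 1) * Fr + Ir))
        + (Ir : ℝ) * ((lam : ℝ) * Fr * α / (((lam : ℝ) - 1) * Fr + Ir))
      = (lam : ℝ) * Fr * α * (((lam : ℝ) - 1) * Fk + Ir) / (((lam : ℝ) - 1) * Fr + Ir)) ∧
    ((lam : ℝ) * Fr * α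
      = (lam : ℝ) * Fr * (((lam : ℝ) - 1) * Fr * α / (((lam : ℝ) - 1) * Fr + Ir))
        + (Ir : ℝ) * ((lam : ℝ) * Fr * α / (((lam : ℝ) - 1) * Fr + Ir))) ∧
    ((lam : ℝ) * (((lam : ℝ) - 1) * Fr * α / (((lam : ℝ) - 1) * Fr + Ir))
      = ((lam : ℝ) - 1) * ((lam : ℝ) * Fr * α / (((lam : ℝ) - 1) * Fr + Ir))) := by
  have hl : (2 : ℝ) ≤ lam := by exact_mod_cast hlam
  have hr : (0 : ℝ) < Fr := by exact_mod_cast hFr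
  have hI : (0 : ℝ) < Ir := by exact_mod_cast hIr
  have hk : (Fr : ℝ) < Fk := by exact_mod_cast hFrFk
  have hIr' : (Fr : ℝ) ≤ Ir := by exact_mod_cast hIrFr
  generalize (lam : ℝ) = l at *
  generalize (Fr : ℝ) = r at *
  generalize (Fk : ℝ) = k at *
  generalize (Ir : ℝ) = I at *
  have hl1 : 0 < l - 1 := by linarith
  have hl0 : 0 < l := by linarith
  have hD : 0 < (l - 1) * r + I := by positivity
  have e1 : l * k * ((l - 1) * r * α / ((l - 1) * r + I))
        + I * (l * r * α / ((l - 1) * r + I))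
      = l * r * α * ((l - 1) * k + I) / ((l - 1) * r + I) := by
    field_simp
  have e2 : l * r * α = l * r * ((l - 1) * r * α / ((l - 1) * r + I))
        + I * (l * r * α / ((l - 1) * r + I)) := by
    field_simp
  have e3 : l * ((l - 1) * r * α / ((l - 1) * r + I))
      = (l - 1) * (l * r * α / ((l - 1) * r + I)) := by
    field_simp
  refine ⟨⟨⟨_, _, ?_, ?_, ?_, ?_, e2.le, e3.ge, e1.symm⟩, ?_⟩, e1, e2, e3⟩
  · positivity
  · rw [div_le_iff₀ hD]
    nlinarith [mul_pos hα hI]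
  · positivity
  · rw [div_le_iff₀ hD]
    nlinarith [mul_nonneg hα.le (sub_nonneg.2 hIr')]
  · rintro g ⟨b1, b2, -, -, -, -, h1, h2, rfl⟩
    rw [div_le_iff₀ hD]
    have hk0 : 0 < k := hr.trans hk
    have hp : 0 ≤ (l - 1) * k + I := by positivity
    have hq : 0 ≤ I * (k - r) := mul_nonneg hI.le (sub_nonneg.2 hk.le)
    have a1 := mul_le_mul_of_nonneg_left h1 hp
    have a2 := mul_le_mul_of_nonneg_left h2 hq
    linarith
end

section
/- Suppose Fr ≤ Fk and Ir ≥ Fr. Then the lower bound of Theorem 2 is at most the read conversion bandwidth of access-optimal convertible codes: λ·Fr·α·((λ − 1)·Fk + Ir)/((λ − 1)·Fr + Ir) ≤ ((λ − 1)·Fk + Fr)·α, with equality if and only if Ir = Fr or Fk = Fr. -/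
/-- If `Fr ≤ Fk` and `Ir ≥ Fr`, the lower bound of Theorem 2 is at most the read
conversion bandwidth of access-optimal convertible codes, with equality iff
`Ir = Fr` or `Fk = Fr`. -/
theorem tight_bound_le_access_optimal (lam Fk Fr Ir : ℕ) (hlam : 2 ≤ lam)
    (hFk : 0 < Fk) (hFr : 0 < Fr) (hIr : 0 < Ir)
    (hFrFk : Fr ≤ Fk) (hIrFr : Fr ≤ Ir)
    (α : ℝ) (hα : 0 < α) :
    (lam : ℝ) * Fr * α * (((lam : ℝ) - 1) * Fk + Ir) / (((lam : ℝ) - 1) * Fr + Ir)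
      ≤ (((lam : ℝ) - 1) * Fk + Fr) * α ∧
    ((lam : ℝ) * Fr * α * (((lam : ℝ) - 1) * Fk + Ir) / (((lam : ℝ) - 1) * Fr + Ir)
        = (((lam : ℝ) - 1) * Fk + Fr) * α ↔ Ir = Fr ∨ Fk = Fr) := by
  have hm : (0 : ℝ) < (lam : ℝ) - 1 := by
    have : (2 : ℝ) ≤ lam := by exact_mod_cast hlam
    linarith
  have hF : (0 : ℝ) < Fr := by exact_mod_cast hFr
  have hI : (0 : ℝ) < Ir := by exact_mod_cast hIr
  have hK' : (0 : ℝ) ≤ (Fk : ℝ) - Fr := sub_nonneg.mpr (by exact_mod_cast hFrFk)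
  have hI' : (0 : ℝ) ≤ (Ir : ℝ) - Fr := sub_nonneg.mpr (by exact_mod_cast hIrFr)
  have hD : (0 : ℝ) < ((lam : ℝ) - 1) * Fr + Ir := by positivity
  have key : (((lam : ℝ) - 1) * Fk + Fr) * α * (((lam : ℝ) - 1) * Fr + Ir)
      - (lam : ℝ) * Fr * α * (((lam : ℝ) - 1) * Fk + Ir)
      = α * ((lam : ℝ) - 1) * (((Ir : ℝ) - Fr) * ((Fk : ℝ) - Fr)) := by ring
  have hc : (0 : ℝ) < α * ((lam : ℝ) - 1) := mul_pos hα hm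
  constructor
  · rw [div_le_iff₀ hD]
    have := mul_nonneg hc.le (mul_nonneg hI' hK')
    linarith
  · rw [div_eq_iff hD.ne', eq_comm, ← sub_eq_zero, key,
      mul_eq_zero_iff_left hc.ne', mul_eq_zero,
      sub_eq_zero, sub_eq_zero, Nat.cast_inj, Nat.cast_inj]
end

section
/- Suppose Fr < Fk and Fr ≤ Ir ≤ λ·Fr. Then the lower bound of Theorem 2 is at least the lower bound of Theorem 1: λ·Fr·α·((λ − 1)·Fk + Ir)/((λ − 1)·Fr + Ir) ≥ λ·Fk·α − Ir·α·(Fk/Fr − 1). -/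
/-- If `Fr < Fk` and `Fr ≤ Ir ≤ λ·Fr`, the lower bound of Theorem 2 is at least
the lower bound of Theorem 1:
`λ·Fr·α·((λ − 1)·Fk + Ir)/((λ − 1)·Fr + Ir) ≥ λ·Fk·α − Ir·α·(Fk/Fr − 1)`. -/
theorem tight_bound_ge_loose_bound (lam Fk Fr Ir : ℕ) (hlam : 2 ≤ lam)
    (hFk : 0 < Fk) (hFr : 0 < Fr) (hIr : 0 < Ir)
    (hFrFk : Fr < Fk) (hFrIr : Fr ≤ Ir) (hIrlam : Ir ≤ lam * Fr)
    (α : ℝ) (hα : 0 < α) :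
    (lam : ℝ) * Fr * α * (((lam : ℝ) - 1) * Fk + Ir) / (((lam : ℝ) - 1) * Fr + Ir)
      ≥ (lam : ℝ) * Fk * α - (Ir : ℝ) * α * ((Fk : ℝ) / Fr - 1) := by
  have h1 : (2 : ℝ) ≤ lam := by exact_mod_cast hlam
  have h2 : (0 : ℝ) < Fr := by exact_mod_cast hFr
  have h3 : (0 : ℝ) < Ir := by exact_mod_cast hIr
  have h4 : (0 : ℝ) ≤ (Fk : ℝ) - Fr := sub_nonneg.mpr (by exact_mod_cast hFrFk.le)
  have h5 : (0 : ℝ) ≤ (Ir : ℝ) - Fr := sub_nonneg.mpr (by exact_mod_cast hFrIr)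
  have hl : (0 : ℝ) < (lam : ℝ) - 1 := by linarith
  have hD : (0 : ℝ) < ((lam : ℝ) - 1) * Fr + Ir := by positivity
  have hD' := hD.ne'
  have key : (lam : ℝ) * Fr * α * (((lam : ℝ) - 1) * Fk + Ir) / (((lam : ℝ) - 1) * Fr + Ir)
      - ((lam : ℝ) * Fk * α - (Ir : ℝ) * α * ((Fk : ℝ) / Fr - 1))
      = α * Ir * ((Fk : ℝ) - Fr) * ((Ir : ℝ) - Fr) / (Fr * (((lam : ℝ) - 1) * Fr + Ir)) := by
    field_simp
    ring
  have hpos : 0 ≤ α * Ir * ((Fk : ℝ) - Fr) * ((Ir : ℝ) - Fr)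
      / (Fr * (((lam : ℝ) - 1) * Fr + Ir)) := by
    apply div_nonneg
    · exact mul_nonneg (mul_nonneg (by positivity) h4) h5
    · exact (mul_pos h2 hD).le
  linarith
end
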